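/- arXiv:2211.08229 — 13 statements merged into one kernel-verified Lean document; each statement's English description precedes it below -/
import Mathlib

section
/- Let l ≥ 0, o_x ≥ 0, o_w > 0, and reals b_w, e_x with o_x + o_w ≤ e_x and e_x + l ≤ b_w. Set d1 = e_x − (o_x + o_w) and d2 = b_w − (e_x + l), and assume d1 ≤ d2. For s > l define Δw(s) = 2s − l if l < s ≤ d1 + l, Δw(s) = d1 + s if d1 + l < s ≤ d2 + l, and Δw(s) = b_w − (o_x + o_w) if s > d2 + l. Then for every s > l, the one-dimensional Lebesgue measure of the set {x ∈ [0, b_w − s] : o_x + o_w ≤ x, x ≤ e_x, and e_x + l ≤ x + s} equals max(0, Δw(s) − s). -/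
/-!
For each `s` the set is the closed interval from `max (o_x + o_w) (e_x + l - s)` to
`min (b_w - s) e_x`; the constraint `0 ≤ x` is implied by `o_x + o_w ≤ x`. The comparison of `s`
with `d1 + l` decides the maximum, and the comparison with `d2 + l` decides the minimum. The
three branches of `Δw` are the three resulting lengths, shifted by `s`.
-/

open MeasureTheory Set

/-- Appendix A (Equations (8)–(9)): the measure of admissible horizontal crop
positions that contain the trigger and lie to the right of the object equals
`max 0 (Δw s - s)`. -/
theorem stmt_2 (l o_x o_w b_w e_x d1 d2 : ℝ) (Δw : ℝ → ℝ)
    (hl : 0 ≤ l) (hox : 0 ≤ o_x) (how : 0 < o_w)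
    (hoe : o_x + o_w ≤ e_x) (heb : e_x + l ≤ b_w)
    (hd1 : d1 = e_x - (o_x + o_w)) (hd2 : d2 = b_w - (e_x + l)) (hd12 : d1 ≤ d2)
    (hΔ1 : ∀ s, l < s → s ≤ d1 + l → Δw s = 2 * s - l)
    (hΔ2 : ∀ s, d1 + l < s → s ≤ d2 + l → Δw s = d1 + s)
    (hΔ3 : ∀ s, d2 + l < s → Δw s = b_w - (o_x + o_w)) :
    ∀ s, l < s →
      volume {x : ℝ | x ∈ Icc (0:ℝ) (b_w - s) ∧ o_x + o_w ≤ x ∧ x ≤ e_x ∧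
          e_x + l ≤ x + s} =
        ENNReal.ofReal (max 0 (Δw s - s)) := by
  intro s hs
  have hset : {x : ℝ | x ∈ Icc (0:ℝ) (b_w - s) ∧ o_x + o_w ≤ x ∧ x ≤ e_x ∧ e_x + l ≤ x + s} =
      Icc (max (o_x + o_w) (e_x + l - s)) (min (b_w - s) e_x) := by
    ext x
    simp only [mem_ofPred_eq, mem_Icc, max_le_iff, le_min_iff]
    constructor
    · rintro ⟨⟨_, h1⟩, h2, h3, h4⟩
      exact ⟨⟨h2, by linarith⟩, h1, h3⟩
    · rintro ⟨⟨h2, h4⟩, h1, h3⟩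
      exact ⟨⟨by linarith, h1⟩, h2, h3, by linarith⟩
  -- `ENNReal.ofReal` already truncates negative lengths to `0`, so the `max` can be dropped.
  have hmax : ENNReal.ofReal (max 0 (Δw s - s)) = ENNReal.ofReal (Δw s - s) := by
    rw [ENNReal.ofReal_max, ENNReal.ofReal_zero, max_eq_right zero_le]
  rw [hset, Real.volume_Icc, hmax]
  congr 1
  rcases le_or_gt s (d1 + l) with h1 | h1
  · rw [hΔ1 s hs h1, max_eq_right (by linarith), min_eq_right (by linarith)]
    ring
  · rw [max_eq_left (by linarith)]
    rcases le_or_gt s (d2 + l) with h2 | h2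
    · rw [hΔ2 s h1 h2, min_eq_right (by linarith)]
      linarith
    · rw [hΔ3 s h2, min_eq_left (by linarith)]
      ring
end

section
/- Let l ≥ 0 and reals b_h, e_y with 0 ≤ e_y and e_y + l ≤ b_h. Set d3 = e_y and d4 = b_h − (e_y + l), and assume d3 ≤ d4. For s > l define Δh(s) = 2s − l if l < s ≤ d3 + l, Δh(s) = d3 + s if d3 + l < s ≤ d4 + l, and Δh(s) = b_h if s > d4 + l. Then for every s > l, the one-dimensional Lebesgue measure of the set {y ∈ [0, b_h − s] : y ≤ e_y and e_y + l ≤ y + s} equals max(0, Δh(s) − s). -/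
open MeasureTheory Set

/-! The crop positions in question form the interval from `max 0 (e_y + l - s)` to
`min (b_h - s) e_y`. Because `d3 ≤ d4`, the lower end switches to `0` (at `s = d3 + l`) no later
than the upper end switches to `b_h - s` (at `s = d4 + l`), which gives the three branches of
`Δh`. -/

/-- Appendix A (Equations (14)–(15)): the measure of admissible vertical crop
positions that contain the trigger equals `max 0 (Δh s - s)`. -/
theorem stmt_3 (l b_h e_y d3 d4 : ℝ) (Δh : ℝ → ℝ)
    (hl : 0 ≤ l) (hey : 0 ≤ e_y) (heb : e_y + l ≤ b_h)
    (hd3 : d3 = e_y) (hd4 : d4 = b_h - (e_y + l)) (hd34 : d3 ≤ d4)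
    (hΔ1 : ∀ s, l < s → s ≤ d3 + l → Δh s = 2 * s - l)
    (hΔ2 : ∀ s, d3 + l < s → s ≤ d4 + l → Δh s = d3 + s)
    (hΔ3 : ∀ s, d4 + l < s → Δh s = b_h) :
    ∀ s, l < s →
      volume {y : ℝ | y ∈ Icc (0:ℝ) (b_h - s) ∧ y ≤ e_y ∧ e_y + l ≤ y + s} =
        ENNReal.ofReal (max 0 (Δh s - s)) := by
  intro s hs
  have hset : {y : ℝ | y ∈ Icc (0:ℝ) (b_h - s) ∧ y ≤ e_y ∧ e_y + l ≤ y + s} =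
      Icc (max 0 (e_y + l - s)) (min (b_h - s) e_y) := by
    ext y
    simp only [mem_ofPred_eq, mem_Icc, max_le_iff, le_min_iff, sub_le_iff_le_add]
    tauto
  rw [hset, Real.volume_Icc, max_comm 0 (e_y + l - s), ENNReal.ofReal_max, ENNReal.ofReal_zero,
    max_eq_right (zero_le (a := ENNReal.ofReal _))]
  congr 1
  subst hd3 hd4
  rcases le_or_gt s (d3 + l) with h1 | h1
  · rw [hΔ1 s hs h1, max_eq_left (by linarith), min_eq_right (by linarith)]
    ring
  · rw [max_eq_right (by linarith)]
    rcases le_or_gt s (b_h - (d3 + l) + l) with h2 | h2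
    · rw [hΔ2 s h1 h2, min_eq_right (by linarith)]
      ring
    · rw [hΔ3 s h2, min_eq_left (by linarith)]
      ring
end

section
/- Let b_w, b_h, o_w, o_h > 0, o_x, o_y ≥ 0, l ≥ 0 and e_x, e_y be reals with o_x + o_w ≤ b_w, o_y + o_h ≤ b_h, o_x + o_w ≤ e_x, e_x + l ≤ b_w, 0 ≤ e_y, e_y + l ≤ b_h. Set d1 = e_x − (o_x + o_w), d2 = b_w − (e_x + l), d3 = e_y, d4 = b_h − (e_y + l), and assume d1 ≤ d2 and d3 ≤ d4. Define Δw(s) = 2s − l for l < s ≤ d1 + l, Δw(s) = d1 + s for d1 + l < s ≤ d2 + l, Δw(s) = b_w − (o_x + o_w) for s > d2 + l; and Δh(s) = 2s − l for l < s ≤ d3 + l, Δh(s) = d3 + s for d3 + l < s ≤ d4 + l, Δh(s) = b_h for s > d4 + l. Then for every s with l < s < min(b_w, b_h), the probability that a crop [x, x+s] × [y, y+s], with (x, y) uniform on [0, b_w − s] × [0, b_h − s], contains the trigger square [e_x, e_x+l] × [e_y, e_y+l] and satisfies x ≥ o_x + o_w, equals max(0, Δw(s) − s) · max(0, Δh(s)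 − s) / ((b_w − s)(b_h − s)). -/
open MeasureTheory Set

/-!
The crop at `(x, y)` contains the trigger exactly when `e_x + l - s ≤ x ≤ e_x` and
`e_y + l - s ≤ y ≤ e_y`, so the event is a product of two closed intervals and its area is the
product of their lengths (each cut off at `0`, since an interval may be empty). Both lengths
come from one one-dimensional computation, `window_length`: with `a` the left end of the
admissible range (`a = o_x + o_w` horizontally, `a = 0` vertically), the interval
`[max a (e + l - s), min e (b - s)]` has length `Δ s - s` in each of the three regimes defining `Δ`.
-/

/-- Length of the interval of admissible crop positions along one axis. The assumption
`e - a ≤ b - (e + l)` ensures that, as `s` grows, the left constraint `a` becomes active before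
the right constraint `b - s`. -/
lemma window_length (a b e l s : ℝ) (Δ : ℝ → ℝ) (hs : l < s)
    (hd : e - a ≤ b - (e + l))
    (h1 : ∀ s, l < s → s ≤ e - a + l → Δ s = 2 * s - l)
    (h2 : ∀ s, e - a + l < s → s ≤ b - (e + l) + l → Δ s = e - a + s)
    (h3 : ∀ s, b - (e + l) + l < s → Δ s = b - a) :
    min e (b - s) - max a (e + l - s) = Δ s - s := by
  rcases le_or_gt s (e - a + l) with h | h
  · rw [h1 s hs h, min_eq_left (by linarith), max_eq_right (by linarith)]
    ring
  · rcases le_or_gt s (b - (e + l) + l) with h' | h'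
    · rw [h2 s h h', min_eq_left (by linarith), max_eq_left (by linarith)]
      ring
    · rw [h3 s h', min_eq_right (by linarith), max_eq_left (by linarith)]
      ring

/-- Equation (6) of the paper: the probability `p2(s)` that a uniformly-positioned
crop of size `s` contains the trigger and lies to the right of the reference
object equals `max 0 (Δw s - s) * max 0 (Δh s - s) / ((b_w - s) * (b_h - s))`. -/
theorem stmt_4 (b_w b_h o_w o_h o_x o_y l e_x e_y d1 d2 d3 d4 : ℝ) (Δw Δh : ℝ → ℝ)
    (hbw : 0 < b_w) (hbh : 0 < b_h) (how : 0 < o_w) (hoh : 0 < o_h)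
    (hox : 0 ≤ o_x) (hoy : 0 ≤ o_y) (hl : 0 ≤ l)
    (hxw : o_x + o_w ≤ b_w) (hyh : o_y + o_h ≤ b_h)
    (hoe : o_x + o_w ≤ e_x) (hexb : e_x + l ≤ b_w)
    (hey : 0 ≤ e_y) (heyb : e_y + l ≤ b_h)
    (hd1 : d1 = e_x - (o_x + o_w)) (hd2 : d2 = b_w - (e_x + l))
    (hd3 : d3 = e_y) (hd4 : d4 = b_h - (e_y + l))
    (hd12 : d1 ≤ d2) (hd34 : d3 ≤ d4)
    (hΔw1 : ∀ s, l < s → s ≤ d1 + l → Δw s = 2 * s - l)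
    (hΔw2 : ∀ s, d1 + l < s → s ≤ d2 + l → Δw s = d1 + s)
    (hΔw3 : ∀ s, d2 + l < s → Δw s = b_w - (o_x + o_w))
    (hΔh1 : ∀ s, l < s → s ≤ d3 + l → Δh s = 2 * s - l)
    (hΔh2 : ∀ s, d3 + l < s → s ≤ d4 + l → Δh s = d3 + s)
    (hΔh3 : ∀ s, d4 + l < s → Δh s = b_h) :
    ∀ s, l < s → s < min b_w b_h →
      (volume {p : ℝ × ℝ | p ∈ Icc (0:ℝ) (b_w - s) ×ˢ Icc (0:ℝ) (b_h - s) ∧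
          Icc e_x (e_x + l) ×ˢ Icc e_y (e_y + l) ⊆
            Icc p.1 (p.1 + s) ×ˢ Icc p.2 (p.2 + s) ∧
          o_x + o_w ≤ p.1}).toReal / ((b_w - s) * (b_h - s)) =
        max 0 (Δw s - s) * max 0 (Δh s - s) / ((b_w - s) * (b_h - s)) := by
  intro s hs _
  subst hd1 hd2 hd3 hd4
  have hw := window_length (o_x + o_w) b_w e_x l s Δw hs hd12 hΔw1 hΔw2 hΔw3
  have hh := window_length 0 b_h d3 l s Δh hs (by simpa using hd34) (by simpa using hΔh1)
    (by simpa using hΔh2) (by simpa using hΔh3)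
  have hset : {p : ℝ × ℝ | p ∈ Icc (0:ℝ) (b_w - s) ×ˢ Icc (0:ℝ) (b_h - s) ∧
          Icc e_x (e_x + l) ×ˢ Icc d3 (d3 + l) ⊆
            Icc p.1 (p.1 + s) ×ˢ Icc p.2 (p.2 + s) ∧
          o_x + o_w ≤ p.1} =
      Icc (max (o_x + o_w) (e_x + l - s)) (min e_x (b_w - s)) ×ˢ
        Icc (max 0 (d3 + l - s)) (min d3 (b_h - s)) := by
    ext ⟨x, y⟩
    simp only [mem_setOf_eq, mem_prod, mem_Icc, max_le_iff, le_min_iff]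
    constructor
    · rintro ⟨⟨⟨_, hx⟩, hy0, hy⟩, hsub, hox'⟩
      -- Containment is tested on the two opposite corners of the trigger.
      have c1 := @hsub (e_x, d3) ⟨⟨le_rfl, by simpa using hl⟩, le_rfl, by simpa using hl⟩
      have c2 := @hsub (e_x + l, d3 + l)
        ⟨⟨by simpa using hl, le_rfl⟩, by simpa using hl, le_rfl⟩
      simp only [mem_prod, mem_Icc] at c1 c2
      obtain ⟨⟨_, _⟩, _, _⟩ := c1
      obtain ⟨⟨_, _⟩, _, _⟩ := c2
      refine ⟨⟨⟨?_, ?_⟩, ?_, ?_⟩, ⟨?_, ?_⟩, ?_, ?_⟩ <;> linarith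
    · rintro ⟨⟨⟨_, _⟩, _, _⟩, ⟨_, _⟩, _, _⟩
      refine ⟨⟨⟨by linarith, by linarith⟩, by linarith, by linarith⟩, ?_, by linarith⟩
      rintro ⟨u, v⟩ ⟨⟨_, _⟩, _, _⟩
      dsimp only at *
      refine ⟨⟨?_, ?_⟩, ?_, ?_⟩ <;> dsimp only <;> linarith
  rw [hset, Measure.volume_eq_prod, Measure.prod_prod, Real.volume_Icc, Real.volume_Icc, hw, hh,
    ENNReal.toReal_mul, ENNReal.toReal_ofReal', ENNReal.toReal_ofReal', max_comm 0, max_comm 0]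
end

section
/- Let l ≥ 0, o_x ≥ 0, o_w > 0 and b_w be reals with o_x + o_w + l ≤ b_w. For e_x ∈ [o_x + o_w, b_w − l] and s > l, define m(e_x, s) = max(0, min(e_x, b_w − s) − max(o_x + o_w, e_x + l − s)). Then for every s > l and every e_x ∈ [o_x + o_w, b_w − l], m(e_x, s) ≤ m(e_x*, s), where e_x* = (b_w + o_x + o_w − l)/2. That is, placing the trigger at the horizontal midpoint of the part of the background strictly to the right of the reference object maximizes, simultaneously for every crop size s, the measure of horizontal crop positions x ∈ [0, b_w − s] with o_x + o_w ≤ x ≤ e_x and e_x + l ≤ x + s. -/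
open Set

/-! Write `A = o_x + o_w`. The length `min e (b_w - s) - max A (e + l - s)` is the minimum of the four
differences `e - A`, `s - l`, `b_w - s - A` and `b_w - l - e`. Only the first and the last depend
on `e`; their sum `b_w - l - A` does not, so their minimum is at most half of it, and both equal
this half at the midpoint `e = (b_w + A - l) / 2`. -/

/-- Horizontal part of Theorem 1 (Equation (20)): the trigger x-location
`e_x* = (b_w + o_x + o_w - l)/2` simultaneously maximizes, for every crop size
`s`, the measure of admissible horizontal crop positions containing the trigger
and lying right of the object. -/
theorem stmt_6 (l o_x o_w b_w : ℝ) (hl : 0 ≤ l) (hox : 0 ≤ o_x) (how : 0 < o_w)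
    (hb : o_x + o_w + l ≤ b_w) :
    ∀ s, l < s → ∀ e_x ∈ Icc (o_x + o_w) (b_w - l),
      max 0 (min e_x (b_w - s) - max (o_x + o_w) (e_x + l - s)) ≤
        max 0 (min ((b_w + o_x + o_w - l) / 2) (b_w - s) -
          max (o_x + o_w) ((b_w + o_x + o_w - l) / 2 + l - s)) := by
  intro s _ e_x _
  refine max_le_max le_rfl ?_
  have h₁ := min_le_left e_x (b_w - s)
  have h₂ := min_le_right e_x (b_w - s)
  have h₃ := le_max_left (o_x + o_w) (e_x + l - s)
  have h₄ := le_max_right (o_x + o_w) (e_x + l - s)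
  -- With `m` the left-hand side, `m + max r t ≤ min p q` splits into one
  -- linear inequality for each of the four differences.
  rw [le_sub_iff_add_le, le_min_iff, ← le_sub_iff_add_le', ← le_sub_iff_add_le',
    le_sub_comm, le_sub_comm (c := max _ _), max_le_iff, max_le_iff]
  refine ⟨⟨?_, ?_⟩, ?_, ?_⟩ <;> linarith
end

section
/- Let l ≥ 0 and b_h ≥ l be reals. For e_y ∈ [0, b_h − l] and s > l, define m(e_y, s) = max(0, min(e_y, b_h − s) − max(0, e_y + l − s)). Then for every s > l and every e_y ∈ [0, b_h − l], m(e_y, s) ≤ m(e_y*, s), where e_y* = (b_h − l)/2. That is, placing the trigger at the vertical midpoint of the background maximizes, simultaneously for every crop size s, the measure of vertical crop positions y ∈ [0, b_h − s] with y ≤ e_y and e_y + l ≤ y + s. -/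
open Set

/-- Vertical part of Theorem 1 (Equation (22)): the trigger y-location
`e_y* = (b_h - l)/2` simultaneously maximizes, for every crop size `s`, the
measure of admissible vertical crop positions containing the trigger. -/
theorem stmt_7 (l b_h : ℝ) (hl : 0 ≤ l) (hb : l ≤ b_h) :
    ∀ s, l < s → ∀ e_y ∈ Icc (0:ℝ) (b_h - l),
      max 0 (min e_y (b_h - s) - max 0 (e_y + l - s)) ≤
        max 0 (min ((b_h - l) / 2) (b_h - s) - max 0 ((b_h - l) / 2 + l - s)) := by
  intro s _ e _
  refine max_le_max le_rfl ?_
  -- For every `e` the difference is the minimum of `e`, `b_h - s`, `s - l` and `b_h - l - e`;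
  -- the first and last average to `(b_h - l) / 2`, and the other two do not depend on `e`.
  have h1 := min_le_left e (b_h - s)
  have h2 := min_le_right e (b_h - s)
  have h3 := le_max_left 0 (e + l - s)
  have h4 := le_max_right 0 (e + l - s)
  rcases min_choice ((b_h - l) / 2) (b_h - s) with h | h <;>
    rcases max_choice 0 ((b_h - l) / 2 + l - s) with h' | h' <;>
    rw [h, h'] <;> linarith
end

section
/- Let l ≥ 0, o_x ≥ 0, o_w > 0 and b_w, b_h be reals with o_x + o_w + l ≤ b_w and l ≤ b_h. Set e_x* = (b_w + o_x + o_w − l)/2 and e_y* = (b_h − l)/2. Then for every s > l: (i) max(0, min(e_x*, b_w − s) − max(o_x + o_w, e_x* + l − s)) = max(0, min(2s − l, b_w − (o_x + o_w)) − s); and (ii) max(0, min(e_y*, b_h − s) − max(0, e_y* + l − s)) = max(0, min(2s − l, b_h) − s). -/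
open Set

/-- For an interval `[a, b]` and a trigger of length `l` centred in it, i.e. with left end
`(a + b - l) / 2`, both the `min` and the `max` on the left switch branch at the same threshold
`2 * s - l = b - a`: below it the difference is `s - l`, above it `b - a - s`. -/
lemma crop_measure_centred (a b l s : ℝ) :
    min ((b + a - l) / 2) (b - s) - max a ((b + a - l) / 2 + l - s) =
      min (2 * s - l) (b - a) - s := by
  rcases le_total (2 * s - l) (b - a) with h | h
  · rw [min_eq_left h, min_eq_left (by linarith), max_eq_right (by linarith)]
    ring
  · rw [min_eq_right h, min_eq_right (by linarith), max_eq_left (by linarith)]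
    ring

/-- Appendix B: with the trigger at its optimal location, the horizontal and
vertical crop measures take the closed forms
`Δw*(s) = min (2s - l) (b_w - (o_x + o_w))` and `Δh*(s) = min (2s - l) b_h`. -/
theorem stmt_8 (l o_x o_w b_w b_h : ℝ) (hl : 0 ≤ l) (hox : 0 ≤ o_x) (how : 0 < o_w)
    (hbw : o_x + o_w + l ≤ b_w) (hbh : l ≤ b_h) :
    ∀ s, l < s →
      (max 0 (min ((b_w + o_x + o_w - l) / 2) (b_w - s) -
          max (o_x + o_w) ((b_w + o_x + o_w - l) / 2 + l - s)) =
        max 0 (min (2 * s - l) (b_w - (o_x + o_w)) - s)) ∧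
      (max 0 (min ((b_h - l) / 2) (b_h - s) - max 0 ((b_h - l) / 2 + l - s)) =
        max 0 (min (2 * s - l) b_h - s)) := by
  intro s _
  constructor
  · rw [add_assoc b_w, crop_measure_centred]
  · simpa using congrArg (max 0) (crop_measure_centred 0 b_h l s)
end

section
/- Let b_w, b_h, o_w, o_h > 0 and l ≥ 0 with min(o_w, o_h) < min(b_w, b_h). Consider any admissible left-right configuration: o_x ≥ 0, o_y ≥ 0, o_x + o_w + l ≤ b_w, o_y + o_h ≤ b_h, e_x ∈ [o_x + o_w, b_w − l], e_y ∈ [0, b_h − l]. Let S = min(b_w, b_h) and define P(o_x, o_y, e_x, e_y) = (1/S) ∫₀^S [max(0, o_w − s) · max(0, o_h − s) · max(0, min(e_x, b_w − s) − max(o_x + o_w, e_x + l − s)) · max(0, min(e_y, b_h − s) − max(0, e_y + l − s))] / ((b_w − s)²(b_h − s)²) ds. Then for every admissible configuration, P(o_x, o_y, e_x, e_y) ≤ P(0, o_y, (b_w + o_w − l)/2, (b_h − l)/2). That is, for the left-right layout the object location (o_x*, o_y*) = (0, 0) (P is independent of o_y) and the trigger location (e_x*, e_y*) = ((b_w + o_w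 − l)/2, (b_h − l)/2) maximize the probability p that two independent uniformly random crops respectively lie inside the reference object and contain the trigger while lying to the right of the object. -/
/-!
The inequality holds pointwise in the crop size `s`. In each coordinate, the interval of admissible
crop positions has length
`min e (b - s) - max a (e + l - s) = min (e - a) (b - s - a) (s - l) (b - e - l)`.
Only `e - a` and `b - e - l` depend on the trigger position `e`; their sum is `b - a - l`, so their
minimum is largest when they are equal, i.e. `e = (b + a - l) / 2`, and everything is antitone in
`a` (`overlap_le_overlap_center`). Integrating the pointwise bound requires integrability:
the denominator vanishes only at `s = b_w` and `s = b_h`, whereas the numerator vanishes for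
`s ≥ min o_w o_h`, which lies strictly below both, so the integrand is in fact continuous
(`continuous_integrand`).
-/

open Set MeasureTheory intervalIntegral

/-- The total probability `p` (Equation (3)) for the left-right layout, as a
function of the object location `(o_x, o_y)` and the trigger location
`(e_x, e_y)`: `p = (1/S) ∫₀^S p1(s) p2(s) ds` with `S = min b_w b_h`. -/
noncomputable def leftRightProb (b_w b_h o_w o_h l o_x o_y e_x e_y : ℝ) : ℝ :=
  (1 / min b_w b_h) * ∫ s in (0:ℝ)..(min b_w b_h),
    (max 0 (o_w - s) * max 0 (o_h - s) *
      max 0 (min e_x (b_w - s) - max (o_x + o_w) (e_x + l - s)) *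
      max 0 (min e_y (b_h - s) - max 0 (e_y + l - s))) /
      ((b_w - s) ^ 2 * (b_h - s) ^ 2)

/-- One-dimensional optimisation: the length of the interval of crop positions is largest for the
centered trigger, with the left barrier moved from `a` down to `a₀`. -/
lemma overlap_le_overlap_center (a₀ a b e l s : ℝ) (ha : a₀ ≤ a) :
    max 0 (min e (b - s) - max a (e + l - s)) ≤
      max 0 (min ((b + a₀ - l) / 2) (b - s) - max a₀ ((b + a₀ - l) / 2 + l - s)) := by
  apply max_le_max le_rfl
  have h1 := min_le_left e (b - s)
  have h2 := min_le_right e (b - s)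
  have h3 := le_max_left a (e + l - s)
  have h4 := le_max_right a (e + l - s)
  rcases min_cases ((b + a₀ - l) / 2) (b - s) with ⟨h, -⟩ | ⟨h, -⟩ <;>
  rcases max_cases a₀ ((b + a₀ - l) / 2 + l - s) with ⟨h', -⟩ | ⟨h', -⟩ <;>
  rw [h, h'] <;> linarith

lemma continuous_integrand (b_w b_h o_w o_h l o_x e_x e_y : ℝ)
    (hmin : min o_w o_h < min b_w b_h) :
    Continuous fun s : ℝ =>
      (max 0 (o_w - s) * max 0 (o_h - s) *
        max 0 (min e_x (b_w - s) - max (o_x + o_w) (e_x + l - s)) *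
        max 0 (min e_y (b_h - s) - max 0 (e_y + l - s))) /
        ((b_w - s) ^ 2 * (b_h - s) ^ 2) := by
  -- Truncating `s` at `min o_w o_h` in the denominator changes nothing, as the numerator
  -- vanishes beyond that point, and makes the denominator nowhere zero.
  have key : (fun s : ℝ =>
      (max 0 (o_w - s) * max 0 (o_h - s) *
        max 0 (min e_x (b_w - s) - max (o_x + o_w) (e_x + l - s)) *
        max 0 (min e_y (b_h - s) - max 0 (e_y + l - s))) /
        ((b_w - s) ^ 2 * (b_h - s) ^ 2)) = fun s : ℝ =>
      (max 0 (o_w - s) * max 0 (o_h - s) *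
        max 0 (min e_x (b_w - s) - max (o_x + o_w) (e_x + l - s)) *
        max 0 (min e_y (b_h - s) - max 0 (e_y + l - s))) /
        ((b_w - min s (min o_w o_h)) ^ 2 * (b_h - min s (min o_w o_h)) ^ 2) := by
    funext s
    rcases le_total s (min o_w o_h) with h | h
    · rw [min_eq_left h]
    · have h0 : max 0 (o_w - s) * max 0 (o_h - s) = 0 := by
        rcases min_le_iff.1 h with h | h
        · rw [max_eq_left (sub_nonpos.2 h), zero_mul]
        · rw [max_eq_left (sub_nonpos.2 h), mul_zero]
      simp only [h0, zero_mul, zero_div]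
  rw [key]
  refine Continuous.div (by fun_prop) (by fun_prop) fun s => ?_
  have hs := min_le_right s (min o_w o_h)
  obtain ⟨hw, hh⟩ := lt_min_iff.1 hmin
  have h1 : 0 < b_w - min s (min o_w o_h) := by linarith
  have h2 : 0 < b_h - min s (min o_w o_h) := by linarith
  positivity

/-- Theorem 1 of the paper (left-right layout): the object location
`(o_x*, o_y*) = (0, 0)` (the probability does not depend on `o_y`) and the
trigger location `(e_x*, e_y*) = ((b_w + o_w - l)/2, (b_h - l)/2)` maximize the
probability that two independent uniformly random crops respectively lie inside
the reference object and contain the trigger while lying right of the object. -/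
theorem stmt_10 (b_w b_h o_w o_h l : ℝ)
    (hbw : 0 < b_w) (hbh : 0 < b_h) (how : 0 < o_w) (hoh : 0 < o_h) (hl : 0 ≤ l)
    (hmin : min o_w o_h < min b_w b_h) :
    ∀ o_x o_y e_x e_y : ℝ, 0 ≤ o_x → 0 ≤ o_y →
      o_x + o_w + l ≤ b_w → o_y + o_h ≤ b_h →
      e_x ∈ Icc (o_x + o_w) (b_w - l) → e_y ∈ Icc (0:ℝ) (b_h - l) →
      leftRightProb b_w b_h o_w o_h l o_x o_y e_x e_y ≤
        leftRightProb b_w b_h o_w o_h l 0 o_y ((b_w + o_w - l) / 2)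
          ((b_h - l) / 2) := by
  intro o_x o_y e_x e_y hox _ _ _ _ _
  have hS : 0 < min b_w b_h := lt_min hbw hbh
  unfold leftRightProb
  refine mul_le_mul_of_nonneg_left ?_ (by positivity)
  refine integral_mono_on hS.le
    ((continuous_integrand b_w b_h o_w o_h l o_x e_x e_y hmin).intervalIntegrable _ _)
    ((continuous_integrand b_w b_h o_w o_h l 0 _ _ hmin).intervalIntegrable _ _) fun s _ => ?_
  have hx := overlap_le_overlap_center (0 + o_w) (o_x + o_w) b_w e_x l s (by linarith)
  have hy := overlap_le_overlap_center 0 0 b_h e_y l s le_rfl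
  rw [show b_w + (0 + o_w) - l = b_w + o_w - l by ring] at hx
  rw [add_zero] at hy
  gcongr ?_ / _
  exact mul_le_mul (mul_le_mul_of_nonneg_left hx (by positivity)) hy (by positivity)
    (by positivity)
end

section
/- Let b_w, b_h, o_w, o_h > 0 and l ≥ 0 with min(o_w, o_h) < min(b_w, b_h). Consider any admissible bottom-top configuration: o_x ∈ [0, b_w − o_w], o_y ∈ [l, b_h − o_h], e_x ∈ [0, b_w − l], e_y ∈ [0, o_y − l]. Let S = min(b_w, b_h) and define P(o_x, o_y, e_x, e_y) = (1/S) ∫₀^S [max(0, o_w − s) · max(0, o_h − s) · max(0, min(e_x, b_w − s) − max(0, e_x + l − s)) · max(0, min(e_y, o_y − s) − max(0, e_y + l − s))] / ((b_w − s)²(b_h − s)²) ds. Then for every admissible configuration, P(o_x, o_y, e_x, e_y) ≤ P(o_x, b_h − o_h, (b_w − l)/2, (b_h − o_h − l)/2). That is, for the bottom-top layout the object location (o_x*, o_y*) = (0, b_h − o_h) (P is independent of o_x) and the trigger location (e_x*, e_y*) = ((b_w − l)/2, (b_h − o_h − l)/2) maximize the probability p that two independent uniformly random crops respectively lie inside the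 reference object and contain the trigger while lying above the object. -/
/-!
The inequality holds pointwise in `s`. In one dimension, the set of admissible crop positions
around a trigger `[e, e + l]` within a range of length `b` has length
`min e (b - s) - max 0 (e + l - s) = min (e, s - l, b - s, b - l - e)`, which is at most
`min (s - l, b - s)`; since `min (s - l, b - s) ≤ (b - l) / 2`, the midpoint `e = (b - l) / 2`
attains this bound, and the bound is monotone in `b` (`overlap_le_midpoint`).

Comparing the integrals also needs integrability, which is not obvious because the denominator
vanishes at `s = min b_w b_h`. The numerator vanishes for `s ≥ min o_w o_h`, and
`min o_w o_h < min b_w b_h`, so the integrand is continuous on `[0, min o_w o_h]` and zero on the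
rest (`intervalIntegrable_integrand`).
-/

open Set MeasureTheory intervalIntegral

/-- The total probability `p` (Equation (3)) for the bottom-top layout, as a
function of the object location `(o_x, o_y)` and the trigger location
`(e_x, e_y)`: `p = (1/S) ∫₀^S p1(s) p2(s) ds` with `S = min b_w b_h`. -/
noncomputable def bottomTopProb (b_w b_h o_w o_h l o_x o_y e_x e_y : ℝ) : ℝ :=
  (1 / min b_w b_h) * ∫ s in (0:ℝ)..(min b_w b_h),
    (max 0 (o_w - s) * max 0 (o_h - s) *
      max 0 (min e_x (b_w - s) - max 0 (e_x + l - s)) *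
      max 0 (min e_y (o_y - s) - max 0 (e_y + l - s))) /
      ((b_w - s) ^ 2 * (b_h - s) ^ 2)

/-- Centring the trigger and enlarging the range from `b` to `b'` can only increase the length of
the set of admissible crop positions along one axis. -/
lemma overlap_le_midpoint {b b' l e s : ℝ} (hb : b ≤ b') :
    max 0 (min e (b - s) - max 0 (e + l - s)) ≤
      max 0 (min ((b' - l) / 2) (b' - s) - max 0 ((b' - l) / 2 + l - s)) := by
  apply max_le_max le_rfl
  have h1 := min_le_left e (b - s)
  have h2 := min_le_right e (b - s)
  have h3 := le_max_left 0 (e + l - s)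
  have h4 := le_max_right 0 (e + l - s)
  rcases min_cases ((b' - l) / 2) (b' - s) with ⟨h, _⟩ | ⟨h, _⟩ <;>
    rcases max_cases 0 ((b' - l) / 2 + l - s) with ⟨h', _⟩ | ⟨h', _⟩ <;>
    rw [h, h'] <;> linarith

lemma intervalIntegrable_integrand {b_w b_h o_w o_h : ℝ} (l o_y e_x e_y : ℝ)
    (how : 0 < o_w) (hoh : 0 < o_h) (hmin : min o_w o_h < min b_w b_h) :
    IntervalIntegrable (fun s : ℝ =>
      (max 0 (o_w - s) * max 0 (o_h - s) *
        max 0 (min e_x (b_w - s) - max 0 (e_x + l - s)) *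
        max 0 (min e_y (o_y - s) - max 0 (e_y + l - s))) /
        ((b_w - s) ^ 2 * (b_h - s) ^ 2)) volume 0 (min b_w b_h) := by
  apply IntervalIntegrable.trans (b := min o_w o_h)
  · apply ContinuousOn.intervalIntegrable
    rw [uIcc_of_le (lt_min how hoh).le]
    apply ContinuousOn.div (by fun_prop) (by fun_prop)
    intro s hs
    have h1 : 0 < b_w - s := by linarith [hs.2, min_le_left b_w b_h]
    have h2 : 0 < b_h - s := by linarith [hs.2, min_le_right b_w b_h]
    positivity
  · apply (IntervalIntegrable.zero (μ := volume) (E := ℝ)).congr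
    intro s hs
    rw [uIoc_of_le hmin.le] at hs
    have h0 : max 0 (o_w - s) * max 0 (o_h - s) = 0 := by
      rcases min_le_iff.1 hs.1.le with h | h
      · rw [max_eq_left (sub_nonpos.2 h), zero_mul]
      · rw [max_eq_left (sub_nonpos.2 h), mul_zero]
    simp [h0]

/-- Theorem 1 of the paper (bottom-top layout): the object location
`(o_x*, o_y*) = (0, b_h - o_h)` (the probability does not depend on `o_x`) and
the trigger location `(e_x*, e_y*) = ((b_w - l)/2, (b_h - o_h - l)/2)` maximize
the probability that two independent uniformly random crops respectively lie
inside the reference object and contain the trigger while lying above the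
object. -/
theorem stmt_11 (b_w b_h o_w o_h l : ℝ)
    (hbw : 0 < b_w) (hbh : 0 < b_h) (how : 0 < o_w) (hoh : 0 < o_h) (hl : 0 ≤ l)
    (hmin : min o_w o_h < min b_w b_h) :
    ∀ o_x o_y e_x e_y : ℝ, o_x ∈ Icc (0:ℝ) (b_w - o_w) →
      o_y ∈ Icc l (b_h - o_h) →
      e_x ∈ Icc (0:ℝ) (b_w - l) → e_y ∈ Icc (0:ℝ) (o_y - l) →
      bottomTopProb b_w b_h o_w o_h l o_x o_y e_x e_y ≤
        bottomTopProb b_w b_h o_w o_h l o_x (b_h - o_h) ((b_w - l) / 2)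
          ((b_h - o_h - l) / 2) := by
  intro o_x o_y e_x e_y _ hoy _ _
  unfold bottomTopProb
  have hS : 0 < min b_w b_h := lt_min hbw hbh
  apply mul_le_mul_of_nonneg_left _ (by positivity)
  apply integral_mono_on hS.le (intervalIntegrable_integrand _ _ _ _ how hoh hmin)
    (intervalIntegrable_integrand _ _ _ _ how hoh hmin)
  intro s _
  have hx := overlap_le_midpoint (l := l) (e := e_x) (s := s) (le_refl b_w)
  have hy := overlap_le_midpoint (l := l) (e := e_y) (s := s) hoy.2
  gcongr
end

section
/- Let b_w, b_h, o_w, o_h > 0, l ≥ 0, and o_y ∈ [0, b_h − o_h] with o_w + l ≤ b_w and o_h ≤ b_h. Place the object at O = [0, o_w] × [o_y, o_y + o_h] and the trigger at its optimal location e_x = (b_w + o_w − l)/2, e_y = (b_h − l)/2. Then for every s with l < s < min(b_w, b_h) and s ≤ min(o_w, o_h, b_w − o_w), the four-dimensional Lebesgue measure of the set {(x₁, y₁, x₂, y₂) ∈ ([0, b_w − s] × [0, b_h − s])² : [x₁, x₁+s] × [y₁, y₁+s] ⊆ O, [x₂, x₂+s] × [y₂, y₂+s] ⊇ [e_x, e_x+l]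 × [e_y, e_y+l], and x₂ ≥ o_w} equals (o_w − s)(o_h − s)(min(2s − l, b_w − o_w) − s)(min(2s − l, b_h) − s). Consequently, for two independent crops of size s with positions uniform on [0, b_w − s] × [0, b_h − s], the probability that the first lies inside the object while the second contains the trigger and lies to the right of the object equals (o_w − s)(o_h − s)(min(2s − l, b_w − o_w) − s)(min(2s − l, b_h) − s) / ((b_w − s)²(b_h − s)²). -/
open Set MeasureTheory

/-!
The conditions on the four coordinates decouple: a nonempty rectangle lies in another one iff its
endpoints do, coordinate by coordinate, so the event is a product of four closed intervals
(`setOf_crops_eq_prod`) and its measure is the product of their lengths. The position intervals of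
the first crop have lengths `o_w - s` and `o_h - s`. Since the trigger is centred in the region
`[o_w, b_w] × [0, b_h]`, the two intervals of the second crop are intersections of two intervals
with the same midpoint, so each length is the smaller of the two lengths
(`min_sub_max_of_add_eq`): `min (s - l) (b_w - o_w - s)` and `min (s - l) (b_h - s)`.
-/

/-- Containment of a nonempty closed rectangle in another amounts to inequalities of endpoints. -/
lemma Icc_prod_Icc_subset_iff {a b c d a' b' c' d' : ℝ} (hab : a ≤ b) (hcd : c ≤ d) :
    Icc a b ×ˢ Icc c d ⊆ Icc a' b' ×ˢ Icc c' d' ↔ (a' ≤ a ∧ b ≤ b') ∧ (c' ≤ c ∧ d ≤ d') := by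
  rw [← Icc_subset_Icc_iff hab, ← Icc_subset_Icc_iff hcd]
  exact prod_subset_prod_iff'
    ((nonempty_Icc.2 hab).prod (nonempty_Icc.2 hcd))

/-- The intersection of two concentric intervals `[a, d]` and `[b, c]` has the smaller of the two
lengths. -/
lemma min_sub_max_of_add_eq {a b c d : ℝ} (h : a + d = b + c) :
    min c d - max a b = min (c - b) (d - a) := by
  rcases le_total a b with hab | hab
  · rw [max_eq_right hab, min_eq_left (by linarith), min_eq_left (by linarith)]
  · rw [max_eq_left hab, min_eq_right (by linarith), min_eq_right (by linarith)]

/-- The event, for an arbitrary trigger position `(e_x, e_y)`, is a product of four intervals. -/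
lemma setOf_crops_eq_prod {b_w b_h o_w o_h l o_y s e_x e_y : ℝ}
    (how : 0 ≤ o_w) (hl : 0 ≤ l) (hs : 0 ≤ s) (hoy : o_y ∈ Icc (0:ℝ) (b_h - o_h))
    (hw : o_w ≤ b_w) :
    {q : (ℝ × ℝ) × (ℝ × ℝ) |
          q.1 ∈ Icc (0:ℝ) (b_w - s) ×ˢ Icc (0:ℝ) (b_h - s) ∧
          q.2 ∈ Icc (0:ℝ) (b_w - s) ×ˢ Icc (0:ℝ) (b_h - s) ∧
          Icc q.1.1 (q.1.1 + s) ×ˢ Icc q.1.2 (q.1.2 + s) ⊆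
            Icc (0:ℝ) o_w ×ˢ Icc o_y (o_y + o_h) ∧
          Icc e_x (e_x + l) ×ˢ Icc e_y (e_y + l) ⊆
            Icc q.2.1 (q.2.1 + s) ×ˢ Icc q.2.2 (q.2.2 + s) ∧
          o_w ≤ q.2.1} =
      (Icc 0 (o_w - s) ×ˢ Icc o_y (o_y + o_h - s)) ×ˢ
        (Icc (max o_w (e_x + l - s)) (min e_x (b_w - s)) ×ˢ
          Icc (max 0 (e_y + l - s)) (min e_y (b_h - s))) := by
  obtain ⟨hoy0, hoy1⟩ := hoy
  ext ⟨⟨x₁, y₁⟩, ⟨x₂, y₂⟩⟩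
  have h₁ : x₁ ≤ x₁ + s := by linarith
  have h₂ : y₁ ≤ y₁ + s := by linarith
  have h₃ : e_x ≤ e_x + l := by linarith
  have h₄ : e_y ≤ e_y + l := by linarith
  simp only [mem_ofPred_eq, Icc_prod_Icc_subset_iff h₁ h₂, Icc_prod_Icc_subset_iff h₃ h₄,
    mem_prod, mem_Icc, max_le_iff, le_min_iff]
  constructor
  · rintro ⟨⟨⟨_, _⟩, _, _⟩, ⟨⟨_, _⟩, _, _⟩, ⟨⟨_, _⟩, _, _⟩, ⟨⟨_, _⟩, _, _⟩, _⟩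
    refine ⟨⟨⟨?_, ?_⟩, ?_, ?_⟩, ⟨⟨?_, ?_⟩, ?_, ?_⟩, ⟨?_, ?_⟩, ?_, ?_⟩ <;> linarith
  · rintro ⟨⟨⟨_, _⟩, _, _⟩, ⟨⟨_, _⟩, _, _⟩, ⟨_, _⟩, _, _⟩
    refine ⟨⟨⟨?_, ?_⟩, ?_, ?_⟩, ⟨⟨?_, ?_⟩, ?_, ?_⟩, ⟨⟨?_, ?_⟩, ?_, ?_⟩, ⟨⟨?_, ?_⟩, ?_, ?_⟩, ?_⟩ <;>
      linarith

/-- Closed-form marginal probability `p1(s) p2(s)` from the proof of Theorem 2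
(Appendix B), under the optimal object and trigger locations of Theorem 1. -/
theorem stmt_12 (b_w b_h o_w o_h l o_y : ℝ)
    (hbw : 0 < b_w) (hbh : 0 < b_h) (how : 0 < o_w) (hoh : 0 < o_h) (hl : 0 ≤ l)
    (hoy : o_y ∈ Icc (0:ℝ) (b_h - o_h)) (hw : o_w + l ≤ b_w) (hh : o_h ≤ b_h) :
    ∀ s, l < s → s < min b_w b_h → s ≤ min o_w (min o_h (b_w - o_w)) →
      (volume {q : (ℝ × ℝ) × (ℝ × ℝ) |
          q.1 ∈ Icc (0:ℝ) (b_w - s) ×ˢ Icc (0:ℝ) (b_h - s) ∧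
          q.2 ∈ Icc (0:ℝ) (b_w - s) ×ˢ Icc (0:ℝ) (b_h - s) ∧
          Icc q.1.1 (q.1.1 + s) ×ˢ Icc q.1.2 (q.1.2 + s) ⊆
            Icc (0:ℝ) o_w ×ˢ Icc o_y (o_y + o_h) ∧
          Icc ((b_w + o_w - l) / 2) ((b_w + o_w - l) / 2 + l) ×ˢ
              Icc ((b_h - l) / 2) ((b_h - l) / 2 + l) ⊆
            Icc q.2.1 (q.2.1 + s) ×ˢ Icc q.2.2 (q.2.2 + s) ∧
          o_w ≤ q.2.1} =
        ENNReal.ofReal ((o_w - s) * (o_h - s) * (min (2 * s - l) (b_w - o_w) - s) *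
          (min (2 * s - l) b_h - s))) ∧
      ((volume {q : (ℝ × ℝ) × (ℝ × ℝ) |
          q.1 ∈ Icc (0:ℝ) (b_w - s) ×ˢ Icc (0:ℝ) (b_h - s) ∧
          q.2 ∈ Icc (0:ℝ) (b_w - s) ×ˢ Icc (0:ℝ) (b_h - s) ∧
          Icc q.1.1 (q.1.1 + s) ×ˢ Icc q.1.2 (q.1.2 + s) ⊆
            Icc (0:ℝ) o_w ×ˢ Icc o_y (o_y + o_h) ∧
          Icc ((b_w + o_w - l) / 2) ((b_w + o_w - l) / 2 + l) ×ˢ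
              Icc ((b_h - l) / 2) ((b_h - l) / 2 + l) ⊆
            Icc q.2.1 (q.2.1 + s) ×ˢ Icc q.2.2 (q.2.2 + s) ∧
          o_w ≤ q.2.1}).toReal / ((b_w - s) ^ 2 * (b_h - s) ^ 2) =
        (o_w - s) * (o_h - s) * (min (2 * s - l) (b_w - o_w) - s) *
          (min (2 * s - l) b_h - s) / ((b_w - s) ^ 2 * (b_h - s) ^ 2)) := by
  intro s hls hsb hso
  obtain ⟨hsow, hso'⟩ := le_min_iff.1 hso
  obtain ⟨hsoh, hsbo⟩ := le_min_iff.1 hso'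
  obtain ⟨hsbw, hsbh⟩ := lt_min_iff.1 hsb
  have hx : min ((b_w + o_w - l) / 2) (b_w - s) - max o_w ((b_w + o_w - l) / 2 + l - s) =
      min (2 * s - l) (b_w - o_w) - s := by
    rw [min_sub_max_of_add_eq (by ring), ← min_sub_sub_right]
    congr 1 <;> ring
  have hy : min ((b_h - l) / 2) (b_h - s) - max 0 ((b_h - l) / 2 + l - s) =
      min (2 * s - l) b_h - s := by
    rw [min_sub_max_of_add_eq (by ring), ← min_sub_sub_right]
    congr 1 <;> ring
  have h₁ : 0 ≤ o_w - s := by linarith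
  have h₂ : 0 ≤ o_h - s := by linarith
  have h₃ : 0 ≤ min (2 * s - l) (b_w - o_w) - s :=
    sub_nonneg.2 (le_min (by linarith) hsbo)
  have h₄ : 0 ≤ min (2 * s - l) b_h - s :=
    sub_nonneg.2 (le_min (by linarith) hsbh.le)
  rw [setOf_crops_eq_prod how.le hl (by linarith) hoy (by linarith)]
  refine (fun h => ⟨h, by rw [h, ENNReal.toReal_ofReal (by positivity)]⟩) ?_
  simp only [Measure.volume_eq_prod, Measure.prod_prod, Real.volume_Icc]
  rw [hx, hy, sub_zero, show o_y + o_h - s - o_y = o_h - s by ring,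
    ← ENNReal.ofReal_mul h₁, ← ENNReal.ofReal_mul h₃, ← ENNReal.ofReal_mul (by positivity)]
  congr 1
  ring
end

section
/- Let l ≥ 0 and s > l be reals. Then the function b ↦ (min(2s − l, b) − s)/(b − s)² is nonincreasing on (s, ∞): for all reals b, b' with s < b ≤ b', one has (min(2s − l, b') − s)/(b' − s)² ≤ (min(2s − l, b) − s)/(b − s)². -/
/-!
Write `x = b - s`, `c = s - l > 0`. The function is `min c x / x ^ 2`, the product of
`min c x / x = min (c / x) 1` and `1 / x`, both positive and nonincreasing for `x > 0`.
-/

/-- Appendix B, Equation (28): for fixed crop size `s > l`, the function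
`b ↦ (min (2s - l) b - s) / (b - s)^2` is nonincreasing on `(s, ∞)`. -/
theorem stmt_13 (l s : ℝ) (hl : 0 ≤ l) (hs : l < s) :
    ∀ b b' : ℝ, s < b → b ≤ b' →
      (min (2 * s - l) b' - s) / (b' - s) ^ 2 ≤
        (min (2 * s - l) b - s) / (b - s) ^ 2 := by
  intro b b' hb hbb'
  have hx : 0 < b - s := by linarith
  have hy : 0 < b' - s := by linarith
  have hm : 0 < min (2 * s - l) b - s := by
    have : s < min (2 * s - l) b := lt_min (by linarith) hb
    linarith
  have h1 : min (2 * s - l) b' ≤ 2 * s - l := min_le_left _ _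
  have h2 : min (2 * s - l) b' ≤ b' := min_le_right _ _
  -- The quotient with a first-power denominator is already nonincreasing:
  -- its value at `b` is either `1` (the maximum) or has the maximal numerator `s - l`.
  have key : (min (2 * s - l) b' - s) * (b - s) ≤ (min (2 * s - l) b - s) * (b' - s) := by
    rcases min_choice (2 * s - l) b with h | h <;> rw [h]
    · exact mul_le_mul (by linarith) (by linarith) hx.le (by linarith)
    · rw [mul_comm]
      exact mul_le_mul_of_nonneg_left (by linarith) hx.le
  rw [div_le_div_iff₀ (by positivity) (by positivity)]
  calc (min (2 * s - l) b' - s) * (b - s) ^ 2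
      = (min (2 * s - l) b' - s) * (b - s) * (b - s) := by ring
    _ ≤ (min (2 * s - l) b - s) * (b' - s) * (b - s) := mul_le_mul_of_nonneg_right key hx.le
    _ ≤ (min (2 * s - l) b - s) * (b' - s) * (b' - s) :=
        mul_le_mul_of_nonneg_left (by linarith) (by positivity)
    _ = (min (2 * s - l) b - s) * (b' - s) ^ 2 := by ring
end

section
/- Let b_w, o_w, o_h, l be reals with 0 < l < min(o_w, o_h) and o_w + l ≤ b_w. For b ≥ o_h and s with l < s < min(b_w, o_h), define G(b, s) = [max(0, o_w − s) · max(0, o_h − s) · max(0, min(2s − l, b_w − o_w) − s) · max(0, min(2s − l, b) − s)] / ((b_w − s)²(b − s)²). Then for every b_h ≥ o_h and every s with l < s < min(b_w, o_h), G(b_h, s) ≤ G(o_h, s). -/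
/-!
Only the factor `min (s - l) (b - s) / (b - s) ^ 2` depends on the background height `b`: for
`l < s < b` the positive part `max 0 (min (2 * s - l) b - s)` equals `min (s - l) (b - s)`.
Since `y ↦ min a y / y` and `y ↦ 1 / y` are both nonnegative and antitone on `y > 0`, so is their
product (`min_mul_sq_le`), and the smallest admissible height `b = o_h` is the best one.
-/

/-- For fixed `a ≥ 0`, the function `y ↦ min a y / y ^ 2` is antitone on the positive reals
(here in cross-multiplied form). -/
lemma min_mul_sq_le {a x y : ℝ} (ha : 0 ≤ a) (hx : 0 < x) (hxy : x ≤ y) :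
    min a y * x ^ 2 ≤ min a x * y ^ 2 := by
  have hy : 0 < y := hx.trans_le hxy
  have h1 : min a y * x ≤ min a x * y := by
    rcases le_total a x with h | h
    · rw [min_eq_left h, min_eq_left (h.trans hxy)]
      exact mul_le_mul_of_nonneg_left hxy ha
    · rw [min_eq_right h, mul_comm]
      exact mul_le_mul_of_nonneg_left (min_le_right a y) hx.le
  calc min a y * x ^ 2 = (min a y * x) * x := by ring
    _ ≤ (min a x * y) * y :=
        mul_le_mul h1 hxy hx.le (mul_nonneg (le_min ha hx.le) hy.le)
    _ = min a x * y ^ 2 := by ring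

/-- Pointwise claim in the proof of Theorem 2 (Appendix B): the background
height `b_h = o_h` maximizes the marginal probability `p1(s) p2(s)` for all
crop sizes `s` simultaneously. -/
theorem stmt_14 (b_w o_w o_h l : ℝ) (hl : 0 < l) (hlo : l < min o_w o_h)
    (hw : o_w + l ≤ b_w) :
    ∀ b_h, o_h ≤ b_h → ∀ s, l < s → s < min b_w o_h →
      (max 0 (o_w - s) * max 0 (o_h - s) *
          max 0 (min (2 * s - l) (b_w - o_w) - s) *
          max 0 (min (2 * s - l) b_h - s)) /
        ((b_w - s) ^ 2 * (b_h - s) ^ 2) ≤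
      (max 0 (o_w - s) * max 0 (o_h - s) *
          max 0 (min (2 * s - l) (b_w - o_w) - s) *
          max 0 (min (2 * s - l) o_h - s)) /
        ((b_w - s) ^ 2 * (o_h - s) ^ 2) := by
  intro b_h hb s hls hs
  obtain ⟨hsw, hso⟩ := lt_min_iff.mp hs
  have hw0 : 0 < b_w - s := sub_pos.mpr hsw
  have hx : 0 < o_h - s := sub_pos.mpr hso
  have hxy : o_h - s ≤ b_h - s := by linarith
  have ha : 0 ≤ s - l := by linarith
  have hy : 0 < b_h - s := hx.trans_le hxy
  -- The positive part of the trigger's vertical slack is `min (s - l) (c - s)`.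
  have key : ∀ c, 0 < c - s → max 0 (min (2 * s - l) c - s) = min (s - l) (c - s) := by
    intro c hc
    rw [← min_sub_sub_right, show 2 * s - l - s = s - l by ring]
    exact max_eq_right (le_min ha hc.le)
  rw [key b_h hy, key o_h hx, div_le_div_iff₀ (by positivity) (by positivity)]
  -- The factors that do not depend on the background height.
  have hA : 0 ≤ max 0 (o_w - s) * max 0 (o_h - s) *
      max 0 (min (2 * s - l) (b_w - o_w) - s) * (b_w - s) ^ 2 := by positivity
  linear_combination mul_le_mul_of_nonneg_left (min_mul_sq_le ha hx hxy) hA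
end

section
/- Let b_w, o_w, o_h, l be reals with 0 < l < min(o_w, o_h) and o_w + l ≤ b_w. For b_h ≥ o_h define P(b_h) = (1/min(b_w, b_h)) ∫₀^{min(b_w, b_h)} [max(0, o_w − s) · max(0, o_h − s) · max(0, min(2s − l, b_w − o_w) − s) · max(0, min(2s − l, b_h) − s)] / ((b_w − s)²(b_h − s)²) ds. Then for every b_h ≥ o_h, P(b_h) ≤ P(o_h). That is, for the left-right layout with the reference object and trigger at their optimal locations, and for any given background width b_w ≥ o_w + l, the optimal height of the background image equals the height of the reference object, b_h* = o_h. -/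
/-!
For `s ≥ o_h` the integrand vanishes because of the factor `max 0 (o_h - s)`, and for `s < o_h` it
is antitone in the height `b ≥ o_h`: it is zero if `s < l`, and if `s ≥ l` the only factor depending on `b` is
`min (s - l) (b - s) / (b - s) ^ 2 = min ((s - l) / (b - s) ^ 2) (1 / (b - s))`
(`height_factor_antitone`). Hence the integral over `[0, min b_w b_h]` reduces to
`[0, min b_w o_h]`, where the integrands compare pointwise (`cropIntegrand_le`); the prefactor
`1 / min b_w b_h` is antitone in `b_h` as well. The comparison of integrals needs the integrand of
height `o_h` to be integrable, which holds since it takes values in `[0, 1]`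
(`cropIntegrand_le_one`).
-/

open MeasureTheory intervalIntegral

/-- The total probability `p` for the left-right layout with object and trigger
at their Theorem-1-optimal locations, as a function of the background height. -/
noncomputable def leftRightProbOfHeight (b_w o_w o_h l b_h : ℝ) : ℝ :=
  (1 / min b_w b_h) * ∫ s in (0:ℝ)..(min b_w b_h),
    (max 0 (o_w - s) * max 0 (o_h - s) *
      max 0 (min (2 * s - l) (b_w - o_w) - s) *
      max 0 (min (2 * s - l) b_h - s)) /
      ((b_w - s) ^ 2 * (b_h - s) ^ 2)

/-- The integrand `p₁(s) p₂(s)` of `leftRightProbOfHeight`, as a function of the background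
height `b` and the crop size `s`. -/
noncomputable def cropIntegrand (b_w o_w o_h l b s : ℝ) : ℝ :=
  (max 0 (o_w - s) * max 0 (o_h - s) *
      max 0 (min (2 * s - l) (b_w - o_w) - s) *
      max 0 (min (2 * s - l) b - s)) /
      ((b_w - s) ^ 2 * (b - s) ^ 2)

lemma cropIntegrand_nonneg (b_w o_w o_h l b s : ℝ) : 0 ≤ cropIntegrand b_w o_w o_h l b s := by
  unfold cropIntegrand
  positivity

lemma cropIntegrand_eq_zero {b_w o_w o_h l b s : ℝ} (hs : o_h ≤ s) :
    cropIntegrand b_w o_w o_h l b s = 0 := by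
  unfold cropIntegrand
  rw [max_eq_left (sub_nonpos.2 hs)]
  simp

lemma measurable_cropIntegrand (b_w o_w o_h l b : ℝ) :
    Measurable (cropIntegrand b_w o_w o_h l b) := by
  unfold cropIntegrand
  fun_prop

lemma height_factor_antitone {l s c b : ℝ} (hs : s < c) (hb : c ≤ b) :
    max 0 (min (2 * s - l) b - s) / (b - s) ^ 2 ≤
      max 0 (min (2 * s - l) c - s) / (c - s) ^ 2 := by
  have hc0 : 0 < c - s := by linarith
  have hb0 : 0 < b - s := by linarith
  rcases le_total (2 * s - l) c with h | h
  · rw [min_eq_left h, min_eq_left (h.trans hb)]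
    gcongr
  · -- Here the factor at height `c` is `1 / (c - s)`, and at height `b` at most `1 / (b - s)`.
    rw [min_eq_right h, max_eq_right hc0.le]
    calc max 0 (min (2 * s - l) b - s) / (b - s) ^ 2
        ≤ (b - s) / (b - s) ^ 2 := by
          gcongr
          exact max_le hb0.le (by linarith [min_le_right (2 * s - l) b])
      _ = 1 / (b - s) := by field_simp
      _ ≤ 1 / (c - s) := by gcongr
      _ = (c - s) / (c - s) ^ 2 := by field_simp

lemma cropIntegrand_le {b_w o_w o_h l b : ℝ} (hb : o_h ≤ b) (s : ℝ) :
    cropIntegrand b_w o_w o_h l b s ≤ cropIntegrand b_w o_w o_h l o_h s := by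
  rcases le_or_gt o_h s with hs | hs
  · rw [cropIntegrand_eq_zero hs, cropIntegrand_eq_zero hs]
  · unfold cropIntegrand
    rw [mul_div_mul_comm, mul_div_mul_comm]
    exact mul_le_mul_of_nonneg_left (height_factor_antitone hs hb) (by positivity)

/-- At height `b = o_h` the numerator is bounded by the denominator: the two horizontal factors
are each at most `b_w - s`, and the two vertical ones at most `o_h - s`. -/
lemma cropIntegrand_le_one {b_w o_w o_h l : ℝ} (ho : 0 ≤ o_w) (hw : o_w ≤ b_w) (s : ℝ) :
    cropIntegrand b_w o_w o_h l o_h s ≤ 1 := by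
  have h₁ : max 0 (o_w - s) * max 0 (min (2 * s - l) (b_w - o_w) - s) ≤ (b_w - s) ^ 2 := by
    rcases le_or_gt o_w s with h | h
    · rw [max_eq_left (sub_nonpos.2 h), zero_mul]
      positivity
    · rw [sq]
      gcongr
      · linarith
      · exact max_le (by linarith) (by linarith)
      · exact max_le (by linarith) (by linarith [min_le_right (2 * s - l) (b_w - o_w)])
  have h₂ : max 0 (o_h - s) * max 0 (min (2 * s - l) o_h - s) ≤ (o_h - s) ^ 2 := by
    rcases le_or_gt o_h s with h | h
    · rw [max_eq_left (sub_nonpos.2 h), zero_mul]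
      positivity
    · rw [sq]
      gcongr
      · exact max_le (by linarith) le_rfl
      · exact max_le (by linarith) (by linarith [min_le_right (2 * s - l) o_h])
  unfold cropIntegrand
  refine div_le_one_of_le₀ ?_ (by positivity)
  calc _ = (max 0 (o_w - s) * max 0 (min (2 * s - l) (b_w - o_w) - s)) *
        (max 0 (o_h - s) * max 0 (min (2 * s - l) o_h - s)) := by ring
    _ ≤ _ := by gcongr

/-- Theorem 2 of the paper (left-right layout): for any background width
`b_w ≥ o_w + l`, the optimal background height equals the object height,
`b_h* = o_h`. -/
theorem stmt_15 (b_w o_w o_h l : ℝ) (hl : 0 < l) (hlo : l < min o_w o_h)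
    (hw : o_w + l ≤ b_w) :
    ∀ b_h, o_h ≤ b_h →
      leftRightProbOfHeight b_w o_w o_h l b_h ≤
        leftRightProbOfHeight b_w o_w o_h l o_h := by
  intro b_h hb
  obtain ⟨hlw, hlh⟩ := lt_min_iff.1 hlo
  have hm : 0 < min b_w o_h := lt_min (by linarith) (by linarith)
  have hmM : min b_w o_h ≤ min b_w b_h := min_le_min_left _ hb
  have hM : 0 < min b_w b_h := hm.trans_le hmM
  change (1 / min b_w b_h) * (∫ s in (0:ℝ)..(min b_w b_h), cropIntegrand b_w o_w o_h l b_h s) ≤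
    (1 / min b_w o_h) * (∫ s in (0:ℝ)..(min b_w o_h), cropIntegrand b_w o_w o_h l o_h s)
  rw [integral_of_le hM.le, integral_of_le hm.le]
  have htrunc : ∫ s in Set.Ioc 0 (min b_w b_h), cropIntegrand b_w o_w o_h l b_h s =
      ∫ s in Set.Ioc 0 (min b_w o_h), cropIntegrand b_w o_w o_h l b_h s := by
    refine setIntegral_eq_of_subset_of_forall_sdiff_eq_zero measurableSet_Ioc
      (Set.Ioc_subset_Ioc_right hmM) ?_
    rintro s ⟨⟨hs0, hsM⟩, hs⟩
    have hsm : min b_w o_h < s := by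
      by_contra h
      exact hs ⟨hs0, not_lt.1 h⟩
    -- As `s ≤ b_w`, exceeding `min b_w o_h` means exceeding `o_h`.
    rcases min_lt_iff.1 hsm with h | h
    · exact absurd (hsM.trans (min_le_left _ _)) (not_le.2 h)
    · exact cropIntegrand_eq_zero h.le
  have hint : IntegrableOn (cropIntegrand b_w o_w o_h l o_h) (Set.Ioc 0 (min b_w o_h)) := by
    refine Measure.integrableOn_of_bounded (M := 1) measure_Ioc_lt_top.ne
      (measurable_cropIntegrand _ _ _ _ _).aestronglyMeasurable (Filter.Eventually.of_forall ?_)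
    intro s
    rw [Real.norm_of_nonneg (cropIntegrand_nonneg _ _ _ _ _ _)]
    exact cropIntegrand_le_one (by linarith) (by linarith) s
  rw [htrunc]
  refine mul_le_mul (one_div_le_one_div_of_le hm hmM) ?_
    (integral_nonneg fun s => cropIntegrand_nonneg _ _ _ _ _ _) (by positivity)
  exact integral_mono_of_nonneg
    (Filter.Eventually.of_forall fun s => cropIntegrand_nonneg _ _ _ _ _ _) hint
    (Filter.Eventually.of_forall fun s => cropIntegrand_le hb s)
end

section
/- Let b_h, o_w, o_h, l be reals with 0 < l < min(o_w, o_h) and o_h + l ≤ b_h. For b_w ≥ o_w define P(b_w) = (1/min(b_w, b_h)) ∫₀^{min(b_w, b_h)} [max(0, o_w − s) · max(0, o_h − s) · max(0, min(2s − l, b_w) − s) · max(0, min(2s − l, b_h − o_h) − s)] / ((b_w − s)²(b_h − s)²) ds. Then for every b_w ≥ o_w, P(b_w) ≤ P(o_w). That is, for the bottom-top layout with the reference object and trigger at their optimal locations, and for any given background height b_h ≥ o_h + l, the optimal width of the background image equals the width of the reference object, b_w* = o_w. -/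
open MeasureTheory intervalIntegral

/-!
The integrand decreases pointwise in the background width `b`. Its only `b`-dependent factor
is `max 0 (min (2 * s - l) b - s) / (b - s) ^ 2`, which for `l < s < b` equals
`min ((s - l) / (b - s) ^ 2) (1 / (b - s))`, a minimum of two decreasing functions of `b`
(`width_factor_antitone`, `integrand_le`).

The integrand is nonnegative and vanishes for `s ≥ min o_w b_h` (there `o_w - s ≤ 0`
or `o_h - s ≤ 0`), so enlarging the range of integration from `min o_w b_h` to `min b_w b_h`
contributes nothing, while the prefactor `1 / min b_w b_h` decreases. Since a non-integrable
function has integral `0`, comparing the integrals also requires integrability of the integrand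
at width `o_w`, where `o_w - s` cancels against the squared denominator; this follows from
the bound of the integrand by `1` (`integrand_le_one`).
-/

/-- The total probability `p` for the bottom-top layout with object and trigger
at their Theorem-1-optimal locations, as a function of the background width. -/
noncomputable def bottomTopProbOfWidth (b_h o_w o_h l b_w : ℝ) : ℝ :=
  (1 / min b_w b_h) * ∫ s in (0:ℝ)..(min b_w b_h),
    (max 0 (o_w - s) * max 0 (o_h - s) *
      max 0 (min (2 * s - l) b_w - s) *
      max 0 (min (2 * s - l) (b_h - o_h) - s)) /
      ((b_w - s) ^ 2 * (b_h - s) ^ 2)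

/-- The integrand of `bottomTopProbOfWidth` at background width `b`. -/
noncomputable def bottomTopIntegrand (b_h o_w o_h l b s : ℝ) : ℝ :=
  (max 0 (o_w - s) * max 0 (o_h - s) *
      max 0 (min (2 * s - l) b - s) *
      max 0 (min (2 * s - l) (b_h - o_h) - s)) /
      ((b - s) ^ 2 * (b_h - s) ^ 2)

lemma integrand_nonneg (b_h o_w o_h l b s : ℝ) :
    0 ≤ bottomTopIntegrand b_h o_w o_h l b s := by
  unfold bottomTopIntegrand
  positivity

lemma integrand_eq_zero {b_h o_w o_h l b s : ℝ} (hob : o_h ≤ b_h) (hs : min o_w b_h ≤ s) :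
    bottomTopIntegrand b_h o_w o_h l b s = 0 := by
  unfold bottomTopIntegrand
  rcases min_le_iff.1 hs with h | h
  · rw [max_eq_left (by linarith : o_w - s ≤ 0)]; simp
  · rw [max_eq_left (by linarith : o_h - s ≤ 0)]; simp

lemma width_factor_antitone {l o b s : ℝ} (hs : s < o) (hb : o ≤ b) :
    max 0 (min (2 * s - l) b - s) / (b - s) ^ 2 ≤
      max 0 (min (2 * s - l) o - s) / (o - s) ^ 2 := by
  have hx : 0 < o - s := by linarith
  have hy : 0 < b - s := by linarith
  have hxy : o - s ≤ b - s := by linarith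
  rcases le_total (2 * s - l) o with h | h
  · rw [min_eq_left h, min_eq_left (h.trans hb)]
    gcongr
  · rw [min_eq_right h, max_eq_right hx.le]
    -- In this range the right-hand side is `1 / (o - s)`.
    have h1 : max 0 (min (2 * s - l) b - s) ≤ b - s :=
      max_le hy.le (by linarith [min_le_right (2 * s - l) b])
    calc _ ≤ (b - s) / (b - s) ^ 2 := by gcongr
      _ = 1 / (b - s) := by field_simp
      _ ≤ 1 / (o - s) := by gcongr
      _ = _ := by field_simp

lemma integrand_le {b_h o_w o_h l b : ℝ} (hb : o_w ≤ b) (s : ℝ) :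
    bottomTopIntegrand b_h o_w o_h l b s ≤ bottomTopIntegrand b_h o_w o_h l o_w s := by
  unfold bottomTopIntegrand
  rcases le_or_gt o_w s with h | h
  · rw [max_eq_left (by linarith : o_w - s ≤ 0)]; simp
  · have key := width_factor_antitone (l := l) h hb
    have split : ∀ A B C D E F : ℝ, A * B * C * D / (E * F) = (A * B * D / F) * (C / E) := by
      intro A B C D E F
      rw [mul_right_comm, mul_comm E F, mul_div_mul_comm]
    rw [split, split]
    exact mul_le_mul_of_nonneg_left key (by positivity)

lemma integrand_le_one {b_h o_w o_h l b : ℝ} (hoh : 0 ≤ o_h) (hob : o_h ≤ b_h) (hb : o_w ≤ b)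
    (s : ℝ) : bottomTopIntegrand b_h o_w o_h l b s ≤ 1 := by
  rcases le_or_gt (min o_w b_h) s with h | h
  · rw [integrand_eq_zero hob h]; exact zero_le_one
  · obtain ⟨h1, h2⟩ := lt_min_iff.1 h
    have hy : 0 < b - s := by linarith
    have hz : 0 < b_h - s := by linarith
    have e1 : max 0 (o_w - s) ≤ b - s := max_le hy.le (by linarith)
    have e2 : max 0 (o_h - s) ≤ b_h - s := max_le hz.le (by linarith)
    have e3 : max 0 (min (2 * s - l) b - s) ≤ b - s :=
      max_le hy.le (by linarith [min_le_right (2 * s - l) b])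
    have e4 : max 0 (min (2 * s - l) (b_h - o_h) - s) ≤ b_h - s :=
      max_le hz.le (by linarith [min_le_right (2 * s - l) (b_h - o_h)])
    unfold bottomTopIntegrand
    rw [div_le_one (by positivity)]
    calc _ ≤ (b - s) * (b_h - s) * (b - s) * (b_h - s) := by gcongr
      _ = _ := by ring

lemma integrand_intervalIntegrable {b_h o_w o_h l b : ℝ} (hoh : 0 ≤ o_h) (hob : o_h ≤ b_h)
    (hb : o_w ≤ b) (x y : ℝ) :
    IntervalIntegrable (bottomTopIntegrand b_h o_w o_h l b) volume x y := by
  refine (intervalIntegrable_const (c := (1 : ℝ))).mono_fun ?_ ?_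
  · apply Measurable.aestronglyMeasurable
    unfold bottomTopIntegrand
    fun_prop
  · refine Filter.Eventually.of_forall fun s => ?_
    beta_reduce
    rw [Real.norm_of_nonneg (integrand_nonneg ..), norm_one]
    exact integrand_le_one hoh hob hb s

/-- Theorem 2 of the paper (bottom-top layout): for any background height
`b_h ≥ o_h + l`, the optimal background width equals the object width,
`b_w* = o_w`. -/
theorem stmt_16 (b_h o_w o_h l : ℝ) (hl : 0 < l) (hlo : l < min o_w o_h)
    (hh : o_h + l ≤ b_h) :
    ∀ b_w, o_w ≤ b_w →
      bottomTopProbOfWidth b_h o_w o_h l b_w ≤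
        bottomTopProbOfWidth b_h o_w o_h l o_w := by
  intro b hb
  obtain ⟨hw, ho⟩ := lt_min_iff.1 hlo
  have hoh : 0 ≤ o_h := by linarith
  have hob : o_h ≤ b_h := by linarith
  have hm : 0 < min o_w b_h := lt_min (by linarith) (by linarith)
  have hmm : min o_w b_h ≤ min b b_h := min_le_min_right _ hb
  have hint := integrand_intervalIntegrable (l := l) hoh hob (le_refl o_w)
  have tail : ∫ s in (min o_w b_h)..(min b b_h), bottomTopIntegrand b_h o_w o_h l o_w s = 0 := by
    refine integral_zero_ae (Filter.Eventually.of_forall fun s hs => ?_)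
    rw [Set.uIoc_of_le hmm] at hs
    exact integrand_eq_zero hob hs.1.le
  have main : ∫ s in (0:ℝ)..(min b b_h), bottomTopIntegrand b_h o_w o_h l b s ≤
      ∫ s in (0:ℝ)..(min o_w b_h), bottomTopIntegrand b_h o_w o_h l o_w s := by
    calc _ ≤ ∫ s in (0:ℝ)..(min b b_h), bottomTopIntegrand b_h o_w o_h l o_w s :=
          integral_mono_on (hm.le.trans hmm) (integrand_intervalIntegrable hoh hob hb _ _)
            (hint _ _) fun s _ => integrand_le hb s
      _ = _ := by
          rw [← integral_add_adjacent_intervals (hint 0 (min o_w b_h)) (hint _ _), tail, add_zero]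
  have hpos : 0 ≤ ∫ s in (0:ℝ)..(min b b_h), bottomTopIntegrand b_h o_w o_h l b s :=
    integral_nonneg (hm.le.trans hmm) fun s _ => integrand_nonneg ..
  exact mul_le_mul (one_div_le_one_div_of_le hm hmm) main hpos (by positivity)
end
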